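/- arXiv:0801.4715 — 3 statements merged into one kernel-verified Lean document; each statement's English description precedes it below -/
import Mathlib

section
/- Let r > 0, n ≥ 1, let A be a real n×n symmetric positive semidefinite matrix, let d ≥ 0, let b : ℝⁿ → ℝⁿ be Lipschitz continuous on every bounded subset of ℝⁿ and satisfy ‖b(w)‖ ≤ C₁‖w‖ + C_b for all w ∈ ℝⁿ with constants C₁, C_b ≥ 0, and let η : C([-r,0];ℝⁿ) → [0, r] be continuous and satisfy condition (H) with some constant η_ign ∈ (0, r]. Then for every T > 0 and every φ ∈ C([-r,0];ℝⁿ), any two mild solutions u¹, u² on [-r,T] of the delay equation u'(t) + A u(t) + d u(t) = b(u(t − η(u_t))) with the same initial condition φ coincide: u¹(t) = u²(t) for all t ∈ [-r,T]. -/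
noncomputable section

/-- The history segment `u_t ∈ C([-r,0];E)`, `u_t(θ) = u(t+θ)`, of a function `u : ℝ → E`
(defined as the zero function in the degenerate case where `s ↦ u(t+s)` fails to be
continuous on `[-r,0]`; under the hypotheses of the theorems below this case never occurs). -/
def histSeg {E : Type*} [NormedAddCommGroup E] (r : ℝ) (u : ℝ → E) (t : ℝ) :
    C(Set.Icc (-r) (0:ℝ), E) := by
  classical
  exact if h : ContinuousOn (fun s : ℝ => u (t + s)) (Set.Icc (-r) 0) then
    ⟨fun θ => u (t + θ.1), continuousOn_iff_continuous_restrict.mp h⟩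
  else 0

/-- Condition (H): the delay functional `η` ignores the values of `φ(θ)` for
`θ ∈ (-ηign, 0]`, i.e. if `φ₁(θ) = φ₂(θ)` for all `θ ∈ [-r, -ηign]` then `η φ₁ = η φ₂`. -/
def CondH {E : Type*} [NormedAddCommGroup E] (r ηign : ℝ)
    (η : C(Set.Icc (-r) (0:ℝ), E) → ℝ) : Prop :=
  ∀ φ₁ φ₂ : C(Set.Icc (-r) (0:ℝ), E),
    (∀ θ : Set.Icc (-r) (0:ℝ), (θ : ℝ) ∈ Set.Icc (-r) (-ηign) → φ₁ θ = φ₂ θ) →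
    η φ₁ = η φ₂

/-- `u : ℝ → ℝⁿ` is a mild solution on `[-r,T]` of
`u'(t) + Au(t) + du(t) = b(u(t - η(u_t)))` with initial condition `φ`:
it is continuous on `[-r,T]`, coincides with `φ` on `[-r,0]`, and satisfies the
variation-of-constants integral equation (with integrable integrand) on `[0,T]`. -/
def IsMildSolution {n : ℕ} (r : ℝ) (hr : 0 < r) (T d : ℝ)
    (A : Matrix (Fin n) (Fin n) ℝ)
    (b : EuclideanSpace ℝ (Fin n) → EuclideanSpace ℝ (Fin n))
    (η : C(Set.Icc (-r) (0:ℝ), EuclideanSpace ℝ (Fin n)) → ℝ)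
    (φ : C(Set.Icc (-r) (0:ℝ), EuclideanSpace ℝ (Fin n)))
    (u : ℝ → EuclideanSpace ℝ (Fin n)) : Prop :=
  ContinuousOn u (Set.Icc (-r) T) ∧
  (∀ θ : Set.Icc (-r) (0:ℝ), u θ = φ θ) ∧
  ∀ t ∈ Set.Icc (0:ℝ) T,
    IntervalIntegrable
      (fun s => Matrix.toEuclideanLin (NormedSpace.exp (-((t - s) • A)))
        (b (u (s - η (histSeg r u s))) - d • u s)) MeasureTheory.volume 0 t ∧
    u t = Matrix.toEuclideanLin (NormedSpace.exp (-(t • A)))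
            (φ ⟨0, Set.right_mem_Icc.mpr (by linarith)⟩) +
      ∫ s in (0:ℝ)..t, Matrix.toEuclideanLin (NormedSpace.exp (-((t - s) • A)))
          (b (u (s - η (histSeg r u s))) - d • u s)

/-!
Suppose two mild solutions agree on `[-r, s₀]`. For `s ≤ s₀ + ηign` the part of the history `u_s`
which `η` can see, `u` on `[s - r, s - ηign]`, lies in `[-r, s₀]`, so by (H) both solutions have the
*same* delay at time `s`. On this window the state dependence has disappeared, and the distance of
the solutions is controlled by the usual Lipschitz estimate: if it is at most `m` on `[-r, t]`, then
at `t` it is at most `K (t - s₀) m`, since the integrands coincide up to `s₀`. Hence the solutions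
agree on `[-r, s₀ + δ]` as soon as `δ ≤ ηign` and `K δ < 1`. As `δ` does not depend on `s₀`,
finitely many such steps reach `T`.
-/

section

open Set MeasureTheory

theorem exists_forall_norm_exp_neg_smul_le {𝔸 : Type*} [NormedRing 𝔸] [NormedAlgebra ℝ 𝔸]
    [CompleteSpace 𝔸] (a : 𝔸) {s : Set ℝ} (hs : IsCompact s) :
    ∃ M, ∀ τ ∈ s, ‖NormedSpace.exp (-(τ • a))‖ ≤ M := by
  let : NormedAlgebra ℚ 𝔸 := NormedAlgebra.restrictScalars ℚ ℝ 𝔸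
  have hcont : Continuous fun τ : ℝ ↦ NormedSpace.exp (-(τ • a)) :=
    NormedSpace.exp_continuous.comp (by fun_prop)
  exact hs.exists_bound_of_continuousOn hcont.continuousOn

theorem exists_forall_norm_toEuclideanCLM_exp_neg_smul_le {ι : Type*} [Fintype ι] [DecidableEq ι]
    (A : Matrix ι ι ℝ) {s : Set ℝ} (hs : IsCompact s) :
    ∃ M, ∀ τ ∈ s, ‖Matrix.toEuclideanCLM (𝕜 := ℝ) (NormedSpace.exp (-(τ • A)))‖ ≤ M := by
  open scoped Matrix.Norms.L2Operator in
  exact exists_forall_norm_exp_neg_smul_le A hs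

theorem right_of_forall_imp_min_add {P : ℝ → Prop} {a b δ : ℝ} (hab : a ≤ b) (hδ : 0 < δ)
    (ha : P a) (hstep : ∀ s ∈ Icc a b, P s → P (min (s + δ) b)) : P b := by
  have hP (k : ℕ) : P (min (a + k * δ) b) := by
    induction k with
    | zero => simpa [hab] using ha
    | succ k ih =>
      have hmem : min (a + k * δ) b ∈ Icc a b :=
        ⟨le_min (le_add_of_nonneg_right (by positivity)) hab, min_le_right _ _⟩
      convert hstep _ hmem ih using 1
      rw [← min_add_add_right, min_assoc, min_eq_right (le_add_of_nonneg_right hδ.le : b ≤ b + δ)]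
      push_cast
      ring_nf
  obtain ⟨k, hk⟩ := exists_nat_ge ((b - a) / δ)
  have hb : b ≤ a + k * δ := by linarith [(div_le_iff₀ hδ).mp hk]
  simpa only [min_eq_right hb] using hP k

theorem eqOn_Icc_of_dist_le_mul {X : Type*} [MetricSpace X] {f g : ℝ → X} {a s₀ c K : ℝ}
    (hf : ContinuousOn f (Icc a c)) (hg : ContinuousOn g (Icc a c)) (heq : EqOn f g (Icc a s₀))
    (hK : 0 ≤ K) (hKc : K * (c - s₀) < 1)
    (hdist : ∀ t ∈ Icc s₀ c, ∀ m, (∀ s ∈ Icc a t, dist (f s) (g s) ≤ m) →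
      dist (f t) (g t) ≤ K * (t - s₀) * m) :
    EqOn f g (Icc a c) := by
  intro t ht
  obtain ⟨p, hp, hmax⟩ := isCompact_Icc.exists_isMaxOn ⟨t, ht⟩
    (continuous_dist.comp_continuousOn (hf.prodMk hg))
  suffices hzero : dist (f p) (g p) = 0 from dist_le_zero.mp (hzero ▸ hmax ht)
  rcases le_total p s₀ with hps | hsp
  · rw [heq ⟨hp.1, hps⟩, dist_self]
  · have hself : dist (f p) (g p) ≤ K * (p - s₀) * dist (f p) (g p) :=
      hdist p ⟨hsp, hp.2⟩ _ fun s hs ↦ hmax ⟨hs.1, hs.2.trans hp.2⟩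
    have hlt : K * (p - s₀) < 1 :=
      (mul_le_mul_of_nonneg_left (sub_le_sub_right hp.2 s₀) hK).trans_lt hKc
    nlinarith [dist_nonneg (x := f p) (y := g p)]

theorem dist_integral_le_of_eqOn_of_dist_le {E : Type*} [NormedAddCommGroup E] [NormedSpace ℝ E]
    {f g : ℝ → E} {a c b C : ℝ} (hf : IntervalIntegrable f volume a b)
    (hg : IntervalIntegrable g volume a b) (hac : a ≤ c) (hcb : c ≤ b)
    (heq : EqOn f g (Ioc a c)) (hdist : ∀ s ∈ Ioc c b, dist (f s) (g s) ≤ C) :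
    dist (∫ s in a..b, f s) (∫ s in a..b, g s) ≤ C * (b - c) := by
  have hfg := hf.sub hg
  have hc : c ∈ uIcc a b := by rw [uIcc_of_le (hac.trans hcb)]; exact ⟨hac, hcb⟩
  have hzero : ∫ s in a..c, (f s - g s) = 0 := by
    refine intervalIntegral.integral_zero_ae (.of_forall fun s hs ↦ ?_)
    rw [uIoc_of_le hac] at hs
    rw [heq hs, sub_self]
  calc dist (∫ s in a..b, f s) (∫ s in a..b, g s)
      = ‖∫ s in a..b, (f s - g s)‖ := by
        rw [dist_eq_norm, intervalIntegral.integral_sub hf hg]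
    _ = ‖∫ s in c..b, (f s - g s)‖ := by
        rw [← intervalIntegral.integral_add_adjacent_intervals
          (hfg.mono_set (uIcc_subset_uIcc_left hc)) (hfg.mono_set (uIcc_subset_uIcc_right hc)),
          hzero, zero_add]
    _ ≤ C * |b - c| := intervalIntegral.norm_integral_le_of_norm_le_const fun s hs ↦ by
        rw [uIoc_of_le hcb] at hs
        rw [← dist_eq_norm]
        exact hdist s hs
    _ = C * (b - c) := by rw [abs_of_nonneg (sub_nonneg.mpr hcb)]

theorem sub_mem_Icc_neg {r s x : ℝ} (hs : 0 ≤ s) (hx : x ∈ Icc 0 r) : s - x ∈ Icc (-r) s :=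
  ⟨by linarith [hx.2], by linarith [hx.1]⟩

variable {E : Type*} [NormedAddCommGroup E] {r T ηign s₀ s t d : ℝ} {b : E → E}
  {η : C(Icc (-r) (0 : ℝ), E) → ℝ} {u u₁ u₂ : ℝ → E}

theorem histSeg_apply (hu : ContinuousOn u (Icc (-r) T)) (hs : s ∈ Icc 0 T)
    (θ : Icc (-r) (0 : ℝ)) : histSeg r u s θ = u (s + θ) := by
  have hcont : ContinuousOn (fun x ↦ u (s + x)) (Icc (-r) 0) :=
    hu.comp (by fun_prop) fun x hx ↦ ⟨by linarith [hs.1, hx.1], by linarith [hs.2, hx.2]⟩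
  rw [histSeg, dif_pos hcont]
  rfl

theorem CondH.apply_histSeg_eq (hH : CondH r ηign η) (hu₁ : ContinuousOn u₁ (Icc (-r) T))
    (hu₂ : ContinuousOn u₂ (Icc (-r) T)) (heq : EqOn u₁ u₂ (Icc (-r) s₀)) (hs : s ∈ Icc 0 T)
    (hs₀ : s ≤ s₀ + ηign) : η (histSeg r u₁ s) = η (histSeg r u₂ s) := by
  refine hH _ _ fun θ hθ ↦ ?_
  rw [histSeg_apply hu₁ hs, histSeg_apply hu₂ hs]
  exact heq ⟨by linarith [hs.1, hθ.1], by linarith [hθ.2]⟩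

variable [NormedSpace ℝ E]

/-- The right-hand side `b(u(s - η(u_s))) - d u(s)` of the delay equation, as a function of time,
along a given `u`. -/
def delayForcing (b : E → E) (η : C(Icc (-r) (0 : ℝ), E) → ℝ) (d : ℝ) (u : ℝ → E) (s : ℝ) : E :=
  b (u (s - η (histSeg r u s))) - d • u s

theorem delayForcing_eq_of_eqOn (hs : 0 ≤ s) (hη : η (histSeg r u₂ s) ∈ Icc 0 r)
    (hdelay : η (histSeg r u₁ s) = η (histSeg r u₂ s)) (heq : EqOn u₁ u₂ (Icc (-r) s)) :
    delayForcing b η d u₁ s = delayForcing b η d u₂ s := by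
  have hmem := sub_mem_Icc_neg hs hη
  rw [delayForcing, delayForcing, hdelay, heq hmem, heq ⟨hmem.1.trans hmem.2, le_rfl⟩]

theorem dist_delayForcing_le {L : NNReal} {B : Set E} {m : ℝ} (hs : 0 ≤ s)
    (hη : η (histSeg r u₂ s) ∈ Icc 0 r)
    (hdelay : η (histSeg r u₁ s) = η (histSeg r u₂ s)) (hL : LipschitzOnWith L b B)
    (hB₁ : MapsTo u₁ (Icc (-r) s) B) (hB₂ : MapsTo u₂ (Icc (-r) s) B)
    (hm : ∀ x ∈ Icc (-r) s, dist (u₁ x) (u₂ x) ≤ m) :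
    dist (delayForcing b η d u₁ s) (delayForcing b η d u₂ s) ≤ (L + ‖d‖) * m := by
  have hmem := sub_mem_Icc_neg hs hη
  rw [delayForcing, delayForcing, hdelay]
  set q := s - η (histSeg r u₂ s)
  calc dist (b (u₁ q) - d • u₁ s) (b (u₂ q) - d • u₂ s)
      ≤ dist (b (u₁ q)) (b (u₂ q)) + dist (d • u₁ s) (d • u₂ s) := dist_sub_sub_le _ _ _ _
    _ ≤ L * dist (u₁ q) (u₂ q) + ‖d‖ * dist (u₁ s) (u₂ s) :=
        add_le_add (hL.dist_le_mul _ (hB₁ hmem) _ (hB₂ hmem)) (dist_smul₀ _ _ _).le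
    _ ≤ L * m + ‖d‖ * m := by
        gcongr
        · exact hm q hmem
        · exact hm s ⟨hmem.1.trans hmem.2, le_rfl⟩
    _ = (L + ‖d‖) * m := by ring

/-- Mild solutions on `[-r, T]` of the delay equation in a normed space, for a family `S` of
bounded operators in the place of `t ↦ exp(-tA)`. The initial condition is not a parameter: it is
the restriction of `u` to `[-r, 0]`. -/
structure IsOperatorMildSolution (S : ℝ → E →L[ℝ] E) (b : E → E)
    (η : C(Icc (-r) (0 : ℝ), E) → ℝ) (T d : ℝ) (u : ℝ → E) : Prop where
  continuousOn : ContinuousOn u (Icc (-r) T)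
  intervalIntegrable : ∀ t ∈ Icc 0 T,
    IntervalIntegrable (fun s ↦ S (t - s) (delayForcing b η d u s)) volume 0 t
  eq_add_integral : ∀ t ∈ Icc 0 T,
    u t = S t (u 0) + ∫ s in (0 : ℝ)..t, S (t - s) (delayForcing b η d u s)

namespace IsOperatorMildSolution

variable {S : ℝ → E →L[ℝ] E} {M : ℝ} {L : NNReal} {B : Set E}

theorem dist_le (h₁ : IsOperatorMildSolution S b η T d u₁)
    (h₂ : IsOperatorMildSolution S b η T d u₂) (hη : ∀ ψ, η ψ ∈ Icc 0 r) (hH : CondH r ηign η)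
    (hS : ∀ τ ∈ Icc 0 T, ‖S τ‖ ≤ M) (hL : LipschitzOnWith L b B)
    (hB₁ : MapsTo u₁ (Icc (-r) T) B) (hB₂ : MapsTo u₂ (Icc (-r) T) B) (hs₀ : 0 ≤ s₀)
    (heq : EqOn u₁ u₂ (Icc (-r) s₀)) (hst : s₀ ≤ t) (htT : t ≤ T) (htη : t ≤ s₀ + ηign) {m : ℝ}
    (hm : ∀ s ∈ Icc (-r) t, dist (u₁ s) (u₂ s) ≤ m) :
    dist (u₁ t) (u₂ t) ≤ M * (L + ‖d‖) * (t - s₀) * m := by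
  have hr : 0 ≤ r := (hη 0).1.trans (hη 0).2
  have ht : t ∈ Icc 0 T := ⟨hs₀.trans hst, htT⟩
  have hdelay : ∀ s ∈ Icc 0 t, η (histSeg r u₁ s) = η (histSeg r u₂ s) := fun s hs ↦
    hH.apply_histSeg_eq h₁.continuousOn h₂.continuousOn heq ⟨hs.1, hs.2.trans htT⟩
      (hs.2.trans htη)
  rw [h₁.eq_add_integral t ht, h₂.eq_add_integral t ht,
    heq (⟨neg_nonpos.mpr hr, hs₀⟩ : (0 : ℝ) ∈ Icc (-r) s₀), dist_add_left]
  refine (dist_integral_le_of_eqOn_of_dist_le (C := M * ((L + ‖d‖) * m))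
    (h₁.intervalIntegrable t ht) (h₂.intervalIntegrable t ht) hs₀ hst
    (fun s hs ↦ ?_) fun s hs ↦ ?_).trans_eq (by ring)
  · exact congrArg (S (t - s)) <| delayForcing_eq_of_eqOn hs.1.le (hη _)
      (hdelay s ⟨hs.1.le, hs.2.trans hst⟩) (heq.mono (Icc_subset_Icc_right hs.2))
  · have hs0 : 0 ≤ s := hs₀.trans hs.1.le
    have hsub : Icc (-r) s ⊆ Icc (-r) T := Icc_subset_Icc_right (hs.2.trans htT)
    rw [dist_eq_norm, ← map_sub]
    refine (S (t - s)).le_of_opNorm_le_of_le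
      (hS _ ⟨sub_nonneg.mpr hs.2, (sub_le_self t hs0).trans htT⟩) ?_
    rw [← dist_eq_norm]
    exact dist_delayForcing_le hs0 (hη _) (hdelay s ⟨hs0, hs.2⟩) hL (hB₁.mono_left hsub)
      (hB₂.mono_left hsub) fun x hx ↦ hm x ⟨hx.1, hx.2.trans hs.2⟩

theorem exists_lipschitzOnWith (h₁ : IsOperatorMildSolution S b η T d u₁)
    (h₂ : IsOperatorMildSolution S b η T d u₂)
    (hb : ∀ B : Set E, Bornology.IsBounded B → ∃ L : NNReal, LipschitzOnWith L b B) :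
    ∃ (L : NNReal) (B : Set E), LipschitzOnWith L b B ∧
      MapsTo u₁ (Icc (-r) T) B ∧ MapsTo u₂ (Icc (-r) T) B := by
  have hbdd₁ := (isCompact_Icc.image_of_continuousOn h₁.continuousOn).isBounded
  have hbdd₂ := (isCompact_Icc.image_of_continuousOn h₂.continuousOn).isBounded
  obtain ⟨L, hL⟩ := hb _ (hbdd₁.union hbdd₂)
  exact ⟨L, _, hL, fun x hx ↦ .inl (mem_image_of_mem u₁ hx),
    fun x hx ↦ .inr (mem_image_of_mem u₂ hx)⟩

end IsOperatorMildSolution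

theorem IsMildSolution.isOperatorMildSolution {n : ℕ} {r T d : ℝ} {hr : 0 < r}
    {A : Matrix (Fin n) (Fin n) ℝ} {b : EuclideanSpace ℝ (Fin n) → EuclideanSpace ℝ (Fin n)}
    {η : C(Icc (-r) (0 : ℝ), EuclideanSpace ℝ (Fin n)) → ℝ}
    {φ : C(Icc (-r) (0 : ℝ), EuclideanSpace ℝ (Fin n))} {u : ℝ → EuclideanSpace ℝ (Fin n)}
    (h : IsMildSolution r hr T d A b η φ u) :
    IsOperatorMildSolution
      (fun τ ↦ Matrix.toEuclideanCLM (𝕜 := ℝ) (NormedSpace.exp (-(τ • A)))) b η T d u where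
  continuousOn := h.1
  intervalIntegrable t ht := (h.2.2 t ht).1
  eq_add_integral t ht := by
    rw [h.2.1 ⟨0, right_mem_Icc.mpr (neg_nonpos.mpr hr.le)⟩]
    exact (h.2.2 t ht).2

theorem mild_solution_unique_general [CompleteSpace E] {S : ℝ → E →L[ℝ] E} {M : ℝ} (hT : 0 ≤ T)
    (hS : ∀ τ ∈ Icc 0 T, ‖S τ‖ ≤ M)
    (hb : ∀ B : Set E, Bornology.IsBounded B → ∃ L : NNReal, LipschitzOnWith L b B)
    (hη : ∀ ψ, η ψ ∈ Icc 0 r) (hign : 0 < ηign) (hH : CondH r ηign η)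
    (h₁ : IsOperatorMildSolution S b η T d u₁) (h₂ : IsOperatorMildSolution S b η T d u₂)
    (hinit : EqOn u₁ u₂ (Icc (-r) 0)) : EqOn u₁ u₂ (Icc (-r) T) := by
  obtain ⟨L, B, hL, hB₁, hB₂⟩ := h₁.exists_lipschitzOnWith h₂ hb
  have hM : 0 ≤ M := (norm_nonneg _).trans (hS 0 (left_mem_Icc.mpr hT))
  set K : ℝ := M * (L + ‖d‖)
  have hK : 0 ≤ K := by positivity
  obtain ⟨δ, hδ, hKδ⟩ := exists_pos_mul_lt one_pos K
  refine right_of_forall_imp_min_add (P := fun s ↦ EqOn u₁ u₂ (Icc (-r) s)) hT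
    (lt_min hδ hign) hinit fun s₀ hs₀ heq ↦ ?_
  set c := min (s₀ + min δ ηign) T
  have hcT : c ≤ T := min_le_right _ _
  have hcδ : c ≤ s₀ + δ := (min_le_left _ _).trans (by gcongr; exact min_le_left _ _)
  have hcη : c ≤ s₀ + ηign := (min_le_left _ _).trans (by gcongr; exact min_le_right _ _)
  have hsub : Icc (-r) c ⊆ Icc (-r) T := Icc_subset_Icc_right hcT
  exact eqOn_Icc_of_dist_le_mul (h₁.continuousOn.mono hsub) (h₂.continuousOn.mono hsub) heq hK
    ((mul_le_mul_of_nonneg_left (sub_le_iff_le_add'.mpr hcδ) hK).trans_lt hKδ)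
    fun t ht m hm ↦ h₁.dist_le h₂ hη hH hS hL hB₁ hB₂ hs₀.1 heq ht.1 (ht.2.trans hcT)
      (ht.2.trans hcη) hm

end

/-- uniqueness of mild solutions of the state-dependent delay ODE
`u'(t) + Au(t) + du(t) = b(u(t - η(u_t)))` under condition (H). -/
theorem mild_solution_unique
    {n : ℕ} (hn : 1 ≤ n) (r : ℝ) (hr : 0 < r)
    (A : Matrix (Fin n) (Fin n) ℝ) (hA : A.PosSemidef) (hAs : A.IsSymm)
    (d : ℝ) (hd : 0 ≤ d)
    (b : EuclideanSpace ℝ (Fin n) → EuclideanSpace ℝ (Fin n))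
    (hbLip : ∀ s : Set (EuclideanSpace ℝ (Fin n)), Bornology.IsBounded s →
      ∃ L : NNReal, LipschitzOnWith L b s)
    (C₁ Cb : ℝ) (hC₁ : 0 ≤ C₁) (hCb : 0 ≤ Cb)
    (hbgrow : ∀ w, ‖b w‖ ≤ C₁ * ‖w‖ + Cb)
    (η : C(Set.Icc (-r) (0:ℝ), EuclideanSpace ℝ (Fin n)) → ℝ)
    (hηrange : ∀ φ, η φ ∈ Set.Icc (0:ℝ) r) (hηcont : Continuous η)
    (ηign : ℝ) (hign0 : 0 < ηign) (hignr : ηign ≤ r) (hH : CondH r ηign η)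
    (T : ℝ) (hT : 0 < T)
    (φ : C(Set.Icc (-r) (0:ℝ), EuclideanSpace ℝ (Fin n)))
    (u₁ u₂ : ℝ → EuclideanSpace ℝ (Fin n))
    (h₁ : IsMildSolution r hr T d A b η φ u₁)
    (h₂ : IsMildSolution r hr T d A b η φ u₂) :
    ∀ t ∈ Set.Icc (-r) T, u₁ t = u₂ t := by
  obtain ⟨M, hM⟩ := exists_forall_norm_toEuclideanCLM_exp_neg_smul_le A (isCompact_Icc (b := T))
  exact mild_solution_unique_general hT.le hM hbLip hηrange hign0 hH h₁.isOperatorMildSolution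
    h₂.isOperatorMildSolution fun t ht ↦ (h₁.2.1 ⟨t, ht⟩).trans (h₂.2.1 ⟨t, ht⟩).symm
end
end

section
/- Let r > 0, n ≥ 1, let A be a real n×n symmetric positive semidefinite matrix, let d ≥ 0, let b : ℝⁿ → ℝⁿ be Lipschitz continuous on every bounded subset of ℝⁿ and satisfy ‖b(w)‖ ≤ C₁‖w‖ + C_b for all w ∈ ℝⁿ with constants C₁, C_b ≥ 0, and let η : C([-r,0];ℝⁿ) → [0, r] be continuous. Then for every φ ∈ C([-r,0];ℝⁿ) there exists a global mild solution, i.e., a continuous function u : [-r,∞) → ℝⁿ with u(θ) = φ(θ) for θ ∈ [-r,0] and u(t) = exp(−tA)·φ(0) + ∫₀ᵗ exp(−(t−s)A)·[ b(u(s − η(u_s))) − d·u(s) ] ds for all t ≥ 0. -/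
noncomputable section

/-! Tonelli's method. Reading the history `ε` late in the Picard operator of `u' = G(u_t)` makes its
`m`-th iterate a fixed point on `(-∞, mε]`. If `G` grows at most linearly, all these iterates obey a
common Gronwall bound, which turns into a common local Lipschitz bound for their integral parts.
By Arzelà–Ascoli they cluster as `ε → 0`, and every cluster point is a fixed point of the undelayed
operator. Applied to `G ψ = F ψ - A ψ(0)` with `F ψ = b(ψ(-η ψ)) - d ψ(0)`, which is continuous
although not locally Lipschitz, this solves the equation, and the variation of constants formula
rewrites the solution in mild form. -/

open Set Filter Topology

section HistSeg

variable {E : Type*} [NormedAddCommGroup E] (r : ℝ)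

lemma histSeg_eq_comp (v : C(ℝ, E)) (t : ℝ) :
    histSeg r v t = v.comp ⟨fun θ : Icc (-r) (0 : ℝ) => t + θ, by fun_prop⟩ :=
  dif_pos (by fun_prop : ContinuousOn (fun s : ℝ => v (t + s)) (Icc (-r) 0))

lemma histSeg_apply_s6 (v : C(ℝ, E)) (t : ℝ) (θ : Icc (-r) (0 : ℝ)) :
    histSeg r v t θ = v (t + θ) := by
  rw [histSeg_eq_comp]
  rfl

lemma histSeg_congr {u v : C(ℝ, E)} {t : ℝ} (huv : ∀ s ≤ t, u s = v s) :
    histSeg r u t = histSeg r v t := by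
  ext1 θ
  rw [histSeg_apply_s6, histSeg_apply_s6, huv _ (by linarith [θ.2.2])]

lemma norm_histSeg_le {v : C(ℝ, E)} {t C : ℝ} (hC : 0 ≤ C) (hv : ∀ s ≤ t, ‖v s‖ ≤ C) :
    ‖histSeg r v t‖ ≤ C := by
  rw [ContinuousMap.norm_le _ hC]
  intro θ
  rw [histSeg_apply_s6]
  exact hv _ (by linarith [θ.2.2])

lemma continuous_histSeg : Continuous fun p : C(ℝ, E) × ℝ => histSeg r p.1 p.2 := by
  simp only [histSeg_eq_comp]
  refine continuous_fst.compCM (ContinuousMap.continuous_of_continuous_uncurry _ ?_)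
  simp only [Function.uncurry_def, ContinuousMap.coe_mk]
  fun_prop

variable {r} in
lemma continuous_map_histSeg_sub (G : C(C(Icc (-r) (0 : ℝ), E), E)) (v : C(ℝ, E)) (ε : ℝ) :
    Continuous fun s => G (histSeg r v (s - ε)) :=
  G.continuous.comp ((continuous_histSeg r).comp (by fun_prop : Continuous fun s => (v, s - ε)))

end HistSeg

section LinearGrowth

variable {V W : Type*} [NormedAddCommGroup V] [NormedAddCommGroup W]

/-- `f` grows at most linearly with constant `K`. The single constant bounds both the linear and the
constant part, so that along `u' = f(u_t)` the quantity `‖u‖ + 1` grows at rate at most `K`. -/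
def HasLinearGrowth (f : V → W) (K : ℝ) : Prop :=
  ∀ x, ‖f x‖ ≤ K * (‖x‖ + 1)

namespace HasLinearGrowth

variable {f g : V → W} {K K' : ℝ}

lemma nonneg (hf : HasLinearGrowth f K) : 0 ≤ K := by
  simpa using (norm_nonneg _).trans (hf 0)

lemma sub (hf : HasLinearGrowth f K) (hg : HasLinearGrowth g K') :
    HasLinearGrowth (fun x => f x - g x) (K + K') := fun x =>
  calc ‖f x - g x‖ ≤ ‖f x‖ + ‖g x‖ := norm_sub_le _ _
    _ ≤ K * (‖x‖ + 1) + K' * (‖x‖ + 1) := add_le_add (hf x) (hg x)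
    _ = (K + K') * (‖x‖ + 1) := by ring

lemma comp_of_norm_le {U : Type*} [NormedAddCommGroup U] (hf : HasLinearGrowth f K) {h : U → V}
    (hh : ∀ x, ‖h x‖ ≤ ‖x‖) : HasLinearGrowth (fun x => f (h x)) K := fun x =>
  (hf _).trans (mul_le_mul_of_nonneg_left (by linarith [hh x]) hf.nonneg)

lemma of_norm_le {C₁ C₀ : ℝ} (hf : ∀ x, ‖f x‖ ≤ C₁ * ‖x‖ + C₀) :
    HasLinearGrowth f (|C₁| + |C₀|) := fun x => by
  have hC₁ : C₁ * ‖x‖ ≤ |C₁| * ‖x‖ := mul_le_mul_of_nonneg_right (le_abs_self _) (norm_nonneg _)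
  have hC₀ : 0 ≤ |C₀| * ‖x‖ := by positivity
  linarith [hf x, le_abs_self C₀, abs_nonneg C₁]

lemma of_continuousLinearMap [NormedSpace ℝ V] [NormedSpace ℝ W] (L : V →L[ℝ] W) :
    HasLinearGrowth L ‖L‖ := fun x =>
  (L.le_opNorm x).trans (mul_le_mul_of_nonneg_left (by linarith) (norm_nonneg L))

end HasLinearGrowth

end LinearGrowth

section ExpEnvelope

/-- The Gronwall envelope of `u' = G(u_t)` for `G` of linear growth `K`: the functions whose norm,
shifted by one as in `HasLinearGrowth`, is at most `c e^{Kt}` for `t ≥ 0` and at most `c` before. -/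
def expEnvelope (E : Type*) [NormedAddCommGroup E] (K c : ℝ) : Set C(ℝ, E) :=
  {v | ∀ t, ‖v t‖ + 1 ≤ c * Real.exp (K * max t 0)}

variable {E : Type*} [NormedAddCommGroup E] {K c : ℝ}

lemma nonneg_of_mem_expEnvelope {v : C(ℝ, E)} (hv : v ∈ expEnvelope E K c) : 0 ≤ c := by
  have hv₀ : ‖v 0‖ + 1 ≤ c := by simpa using hv 0
  linarith [norm_nonneg (v 0)]

lemma mem_expEnvelope_of_norm_add_one_le {v : C(ℝ, E)} (hK : 0 ≤ K) (hv : ∀ t, ‖v t‖ + 1 ≤ c) :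
    v ∈ expEnvelope E K c := fun t =>
  (hv t).trans <| le_mul_of_one_le_right ((by positivity : 0 ≤ ‖v t‖ + 1).trans (hv t))
    (Real.one_le_exp (by positivity))

lemma norm_map_histSeg_le {r : ℝ} {G : C(Icc (-r) (0 : ℝ), E) → E} (hG : HasLinearGrowth G K)
    {v : C(ℝ, E)} (hv : v ∈ expEnvelope E K c) {s t : ℝ} (hst : s ≤ t) (ht : 0 ≤ t) :
    ‖G (histSeg r v s)‖ ≤ K * (c * Real.exp (K * t)) := by
  have hK := hG.nonneg
  have hc := nonneg_of_mem_expEnvelope hv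
  have hv_le : ∀ x ≤ t, ‖v x‖ ≤ c * Real.exp (K * t) - 1 := fun x hx => by
    have : c * Real.exp (K * max x 0) ≤ c * Real.exp (K * t) := by
      gcongr
      exact max_le hx ht
    linarith [hv x]
  have hseg : ‖histSeg r v s‖ ≤ c * Real.exp (K * t) - 1 :=
    norm_histSeg_le r ((norm_nonneg _).trans (hv_le t le_rfl)) fun x hx => hv_le x (hx.trans hst)
  exact (hG _).trans (mul_le_mul_of_nonneg_left (by linarith) hK)

end ExpEnvelope

section ArzelaAscoli

variable {X α : Type*} [TopologicalSpace X] [CompactlyCoherentSpace X] [UniformSpace α]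
  [CompleteSpace α] [T2Space α]

lemma isCompact_closure_of_equicontinuous {S : Set C(X, α)}
    (hS : Equicontinuous fun f : S => (f : X → α))
    (hS_pointwise : ∀ x, ∃ Q, IsCompact Q ∧ ∀ f ∈ S, f x ∈ Q) : IsCompact (closure S) := by
  have : T2Space (UniformOnFun X α {K | IsCompact K}) :=
    UniformOnFun.t2Space_of_covering <| eq_univ_iff_forall.mpr fun x =>
      mem_sUnion_of_mem (mem_singleton x) isCompact_singleton
  exact ArzelaAscoli.isCompact_closure_of_isClosedEmbedding
    (F := fun f : C(X, α) => (f : X → α)) (fun _ hK => hK)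
    ContinuousMap.isUniformEmbedding_toUniformOnFunIsCompact.isClosedEmbedding
    (fun K _ => hS.equicontinuousOn K) (fun _ _ x _ => hS_pointwise x)

end ArzelaAscoli

section DelayedPicard

variable {E : Type*} [NormedAddCommGroup E] [NormedSpace ℝ E] {r : ℝ}

/-- The Picard operator `v ↦ φ + ∫₀ G(v_{s-ε}) ds` of `u' = G(u_t)`, with the history read `ε` late.
Its fixed points for `ε = 0` are the solutions of the equation whose history up to time `0` is `φ`;
on negative times the integral is cut off, leaving `φ`. -/
def delayedPicard (G : C(C(Icc (-r) (0 : ℝ), E), E)) (φ : C(ℝ, E)) (ε : ℝ) (v : C(ℝ, E)) :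
    C(ℝ, E) where
  toFun t := φ t + ∫ s in (0 : ℝ)..max t 0, G (histSeg r v (s - ε))
  continuous_toFun := φ.continuous.add <|
    intervalIntegral.continuous_parametric_intervalIntegral_of_continuous
      (f := fun _ s => G (histSeg r v (s - ε)))
      ((continuous_map_histSeg_sub G v ε).comp continuous_snd) (by fun_prop)

lemma delayedPicard_apply (G : C(C(Icc (-r) (0 : ℝ), E), E)) (φ : C(ℝ, E)) (ε : ℝ) (v : C(ℝ, E))
    (t : ℝ) :
    delayedPicard G φ ε v t = φ t + ∫ s in (0 : ℝ)..max t 0, G (histSeg r v (s - ε)) :=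
  rfl

variable {G : C(C(Icc (-r) (0 : ℝ), E), E)} {φ : C(ℝ, E)} {ε K c : ℝ}

lemma delayedPicard_apply_of_nonpos (v : C(ℝ, E)) {t : ℝ} (ht : t ≤ 0) :
    delayedPicard G φ ε v t = φ t := by
  rw [delayedPicard_apply, max_eq_right ht, intervalIntegral.integral_same, add_zero]

lemma delayedPicard_apply_of_nonneg (v : C(ℝ, E)) {t : ℝ} (ht : 0 ≤ t) :
    delayedPicard G φ ε v t = φ t + ∫ s in (0 : ℝ)..t, G (histSeg r v (s - ε)) := by
  rw [delayedPicard_apply, max_eq_left ht]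

lemma continuous_delayedPicard_apply (G : C(C(Icc (-r) (0 : ℝ), E), E)) (φ : C(ℝ, E)) (t : ℝ) :
    Continuous fun p : ℝ × C(ℝ, E) => delayedPicard G φ p.1 p.2 t := by
  simp only [delayedPicard_apply]
  refine continuous_const.add <|
    intervalIntegral.continuous_parametric_intervalIntegral_of_continuous ?_ continuous_const
  exact G.continuous.comp <| (continuous_histSeg r).comp
    (by fun_prop : Continuous fun q : (ℝ × C(ℝ, E)) × ℝ => (q.1.2, q.2 - q.1.1))

lemma delayedPicard_congr {u v : C(ℝ, E)} {a t : ℝ} (huv : ∀ s ≤ a, u s = v s)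
    (ht : t ≤ a + ε) : delayedPicard G φ ε u t = delayedPicard G φ ε v t := by
  rcases le_total t 0 with ht₀ | ht₀
  · rw [delayedPicard_apply_of_nonpos u ht₀, delayedPicard_apply_of_nonpos v ht₀]
  rw [delayedPicard_apply_of_nonneg u ht₀, delayedPicard_apply_of_nonneg v ht₀]
  congr 1
  refine intervalIntegral.integral_congr fun s hs => congrArg G (histSeg_congr r fun x hx => ?_)
  rw [uIcc_of_le ht₀] at hs
  exact huv x (by linarith [hs.2])

lemma delayedPicard_iterate_succ_apply (m : ℕ) {t : ℝ} (ht : t ≤ m * ε) :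
    (delayedPicard G φ ε)^[m + 1] φ t = (delayedPicard G φ ε)^[m] φ t := by
  induction m generalizing t with
  | zero => exact delayedPicard_apply_of_nonpos φ (by simpa using ht)
  | succ m ih =>
    have ht' : t ≤ m * ε + ε := by
      push_cast at ht
      linarith
    simpa only [Function.iterate_succ_apply'] using
      delayedPicard_congr (fun s hs => ih hs) ht' (G := G) (φ := φ)

lemma integral_mul_mul_exp (K c τ : ℝ) :
    ∫ s in (0 : ℝ)..τ, K * (c * Real.exp (K * s)) = c * Real.exp (K * τ) - c := by
  have hderiv : ∀ s : ℝ,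
      HasDerivAt (fun s => c * Real.exp (K * s)) (K * (c * Real.exp (K * s))) s := fun s =>
    (((hasDerivAt_id' s).const_mul K).exp.const_mul c).congr_deriv (by ring)
  rw [intervalIntegral.integral_eq_sub_of_hasDerivAt (fun s _ => hderiv s)
    (Continuous.intervalIntegrable (by fun_prop) _ _)]
  simp

lemma mapsTo_delayedPicard_expEnvelope (hG : HasLinearGrowth G K) (hφ : ∀ t, ‖φ t‖ + 1 ≤ c)
    (hε : 0 ≤ ε) : MapsTo (delayedPicard G φ ε) (expEnvelope E K c) (expEnvelope E K c) := by
  intro v hv t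
  have hint : ‖∫ s in (0 : ℝ)..max t 0, G (histSeg r v (s - ε))‖ ≤
      c * Real.exp (K * max t 0) - c := by
    rw [← integral_mul_mul_exp]
    exact intervalIntegral.norm_integral_le_of_norm_le (le_max_right _ _)
      (.of_forall fun s hs => norm_map_histSeg_le hG hv (sub_le_self s hε) hs.1.le)
      (Continuous.intervalIntegrable (by fun_prop) _ _)
  rw [delayedPicard_apply]
  linarith [norm_add_le (φ t) (∫ s in (0 : ℝ)..max t 0, G (histSeg r v (s - ε))), hφ t]

lemma dist_delayedPicard_le (hG : HasLinearGrowth G K) (hε : 0 ≤ ε) {v : C(ℝ, E)}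
    (hv : v ∈ expEnvelope E K c) {x y T : ℝ} (hT : 0 ≤ T) (hx : x ≤ T) (hy : y ≤ T) :
    dist (delayedPicard G φ ε v x) (delayedPicard G φ ε v y) ≤
      dist (φ x) (φ y) + K * (c * Real.exp (K * T)) * |x - y| := by
  have hK := hG.nonneg
  have hc := nonneg_of_mem_expEnvelope hv
  have hintegrable := (continuous_map_histSeg_sub G v ε).intervalIntegrable
    (μ := MeasureTheory.volume)
  have hbound : ∀ s ∈ uIoc (max y 0) (max x 0),
      ‖G (histSeg r v (s - ε))‖ ≤ K * (c * Real.exp (K * T)) := fun s hs => by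
    have hsT : s ≤ T := hs.2.trans (max_le (max_le hy hT) (max_le hx hT))
    exact norm_map_histSeg_le hG hv (by linarith) hT
  rw [delayedPicard_apply, delayedPicard_apply]
  refine (dist_add_add_le _ _ _ _).trans (add_le_add le_rfl ?_)
  rw [dist_eq_norm,
    intervalIntegral.integral_interval_sub_left (hintegrable _ _) (hintegrable _ _)]
  exact (intervalIntegral.norm_integral_le_of_norm_le_const hbound).trans
    (mul_le_mul_of_nonneg_left (abs_max_sub_max_le_abs x y 0) (by positivity))

lemma equicontinuous_image2_delayedPicard (hG : HasLinearGrowth G K) (φ : C(ℝ, E)) (c : ℝ) :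
    Equicontinuous fun f : image2 (delayedPicard G φ) (Ici 0) (expEnvelope E K c) =>
      (f : ℝ → E) := by
  intro x
  let modulus : ℝ → ℝ := fun y =>
    dist (φ x) (φ y) + K * (c * Real.exp (K * (|x| + 1))) * |x - y|
  have hmodulus : Tendsto modulus (𝓝 x) (𝓝 0) := by
    have : Continuous modulus := by fun_prop
    simpa [modulus] using this.tendsto x
  refine Metric.equicontinuousAt_of_continuity_modulus modulus hmodulus _ ?_
  filter_upwards [Metric.ball_mem_nhds x one_pos] with y hy
  rintro ⟨_, ε, hε, v, hv, rfl⟩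
  rw [Metric.mem_ball, Real.dist_eq] at hy
  exact dist_delayedPicard_le hG hε hv (by positivity) (by linarith [le_abs_self x])
    (by linarith [le_abs_self x, le_abs_self (y - x)])

lemma isCompact_closure_image2_delayedPicard [ProperSpace E] (hG : HasLinearGrowth G K)
    (hφ : ∀ t, ‖φ t‖ + 1 ≤ c) :
    IsCompact (closure (image2 (delayedPicard G φ) (Ici 0) (expEnvelope E K c))) := by
  refine isCompact_closure_of_equicontinuous (equicontinuous_image2_delayedPicard hG φ c)
    fun t => ⟨_, isCompact_closedBall 0 (c * Real.exp (K * max t 0)), ?_⟩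
  rintro _ ⟨ε, hε, v, hv, rfl⟩
  rw [mem_closedBall_zero_iff]
  linarith [mapsTo_delayedPicard_expEnvelope hG hφ hε hv t]

lemma exists_delayedPicard_eq_of_le (hG : HasLinearGrowth G K) (hφ : ∀ t, ‖φ t‖ + 1 ≤ c)
    (hε : 0 < ε) (T : ℝ) :
    ∃ u ∈ image2 (delayedPicard G φ) (Ici 0) (expEnvelope E K c),
      ∀ t ≤ T, delayedPicard G φ ε u t = u t := by
  obtain ⟨N, hN⟩ := exists_nat_ge (T / ε)
  have hmem : (delayedPicard G φ ε)^[N] φ ∈ expEnvelope E K c :=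
    (mapsTo_delayedPicard_expEnvelope hG hφ hε.le).iterate N
      (mem_expEnvelope_of_norm_add_one_le hG.nonneg hφ)
  refine ⟨(delayedPicard G φ ε)^[N + 1] φ, ?_, fun t ht => ?_⟩
  · rw [Function.iterate_succ_apply']
    exact mem_image2_of_mem hε.le hmem
  · have htN : t ≤ N * ε := ht.trans ((div_le_iff₀ hε).mp hN)
    rw [← Function.iterate_succ_apply' (delayedPicard G φ ε)]
    refine delayedPicard_iterate_succ_apply (N + 1) ?_
    push_cast
    linarith

lemma delayedPicard_zero_eq_self_of_tendsto {ι : Type*} {l : Filter ι} [l.NeBot] {δ : ι → ℝ}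
    {u : ι → C(ℝ, E)} {v : C(ℝ, E)} (hδ : Tendsto δ l (𝓝 0)) (huv : Tendsto u l (𝓝 v))
    (hu : ∀ t, ∀ᶠ k in l, delayedPicard G φ (δ k) (u k) t = u k t) :
    delayedPicard G φ 0 v = v := by
  ext1 t
  have hPicard : Tendsto (fun k => delayedPicard G φ (δ k) (u k) t) l
      (𝓝 (delayedPicard G φ 0 v t)) := by
    simpa only [Function.comp_def] using
      ((continuous_delayedPicard_apply G φ t).tendsto (0, v)).comp (hδ.prodMk_nhds huv)
  have heval : Tendsto (fun k => u k t) l (𝓝 (v t)) :=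
    ((continuous_eval_const t).tendsto v).comp huv
  exact tendsto_nhds_unique (hPicard.congr' (hu t)) heval

theorem exists_delayedPicard_zero_eq_self [ProperSpace E] (hG : HasLinearGrowth G K)
    (hφ : ∀ t, ‖φ t‖ + 1 ≤ c) : ∃ v : C(ℝ, E), delayedPicard G φ 0 v = v := by
  choose u hu_mem hu using fun k : ℕ =>
    exists_delayedPicard_eq_of_le hG hφ (Nat.one_div_pos_of_nat (α := ℝ) (n := k)) k
  obtain ⟨v, -, huv : Tendsto u (hyperfilter ℕ) (𝓝 v)⟩ :=
    (isCompact_closure_image2_delayedPicard hG hφ).ultrafilter_le_nhds ((hyperfilter ℕ).map u)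
      (le_principal_iff.mpr (mem_map.mpr (univ_mem' fun k => subset_closure (hu_mem k))))
  refine ⟨v, delayedPicard_zero_eq_self_of_tendsto
    (tendsto_one_div_add_atTop_nhds_zero_nat.mono_left Nat.hyperfilter_le_atTop) huv fun t => ?_⟩
  exact Nat.hyperfilter_le_atTop <|
    (tendsto_natCast_atTop_atTop.eventually_ge_atTop t).mono fun k hk => hu k t hk

theorem exists_eq_add_integral_histSeg [ProperSpace E] (hG : HasLinearGrowth G K) (hr : 0 ≤ r)
    (φ : C(Icc (-r) (0 : ℝ), E)) :
    ∃ u : C(ℝ, E), (∀ θ : Icc (-r) (0 : ℝ), u θ = φ θ) ∧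
      ∀ t, 0 ≤ t → u t = u 0 + ∫ s in (0 : ℝ)..t, G (histSeg r u s) := by
  let Φ : C(ℝ, E) := ContinuousMap.IccExtend (neg_nonpos.mpr hr) φ
  obtain ⟨u, hu⟩ := exists_delayedPicard_zero_eq_self (φ := Φ) hG
    fun t => add_le_add_left (φ.norm_coe_le_norm (projIcc _ _ (neg_nonpos.mpr hr) t)) 1
  have hu_nonpos : ∀ t ≤ 0, u t = Φ t := fun t ht => by
    rw [← hu, delayedPicard_apply_of_nonpos u ht]
  refine ⟨u, fun θ => (hu_nonpos θ θ.2.2).trans (IccExtend_val _ _ θ), fun t ht => ?_⟩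
  have hΦ : Φ t = u 0 := by
    rw [hu_nonpos 0 le_rfl]
    exact (IccExtend_of_right_le _ _ ht).trans (IccExtend_right _ _).symm
  conv_lhs => rw [← hu, delayedPicard_apply_of_nonneg u ht, hΦ]
  simp only [sub_zero]

end DelayedPicard

section VariationOfConstants

variable {E : Type*} [NormedAddCommGroup E] [NormedSpace ℝ E] [CompleteSpace E]

lemma hasDerivAt_exp_neg_sub_smul (L : E →L[ℝ] E) (t s : ℝ) :
    HasDerivAt (fun s : ℝ => NormedSpace.exp (-((t - s) • L)))
      (NormedSpace.exp (-((t - s) • L)) * L) s := by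
  simp only [← neg_smul, neg_sub]
  exact (hasDerivAt_exp_smul_const (𝕂 := ℝ) L (s - t)).comp_sub_const s t

lemma continuous_exp_neg_sub_smul (L : E →L[ℝ] E) (t : ℝ) :
    Continuous fun s : ℝ => NormedSpace.exp (-((t - s) • L)) :=
  continuous_iff_continuousAt.mpr fun s => (hasDerivAt_exp_neg_sub_smul L t s).continuousAt

theorem eq_exp_smul_add_integral_of_hasDerivAt (L : E →L[ℝ] E) {u f : ℝ → E} {t : ℝ} (ht : 0 ≤ t)
    (hu : ContinuousOn u (Icc 0 t)) (hf : ContinuousOn f (Icc 0 t))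
    (hu' : ∀ s ∈ Ioo 0 t, HasDerivAt u (f s - L (u s)) s) :
    u t = NormedSpace.exp (-(t • L)) (u 0) +
      ∫ s in (0 : ℝ)..t, NormedSpace.exp (-((t - s) • L)) (f s) := by
  have hexp := (continuous_exp_neg_sub_smul L t).continuousOn (s := Icc 0 t)
  have hderiv : ∀ s ∈ Ioo 0 t, HasDerivAt (fun s => NormedSpace.exp (-((t - s) • L)) (u s))
      (NormedSpace.exp (-((t - s) • L)) (f s)) s := fun s hs => by
    convert (hasDerivAt_exp_neg_sub_smul L t s).clm_apply (hu' s hs) using 1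
    rw [map_sub, mul_apply_eq_comp, add_sub_cancel]
  rw [intervalIntegral.integral_eq_sub_of_hasDerivAt_of_le ht (hexp.clm_apply hu) hderiv
    ((hexp.clm_apply hf).intervalIntegrable_of_Icc ht)]
  simp

end VariationOfConstants

theorem exists_mild_solution_of_hasLinearGrowth {E : Type*} [NormedAddCommGroup E]
    [NormedSpace ℝ E] [ProperSpace E] {r : ℝ} (hr : 0 ≤ r) (L : E →L[ℝ] E)
    {F : C(C(Icc (-r) (0 : ℝ), E), E)} {K : ℝ} (hF : HasLinearGrowth F K)
    (φ : C(Icc (-r) (0 : ℝ), E)) :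
    ∃ u : C(ℝ, E), (∀ θ : Icc (-r) (0 : ℝ), u θ = φ θ) ∧ ∀ t, 0 ≤ t →
      u t = NormedSpace.exp (-(t • L)) (u 0) +
        ∫ s in (0 : ℝ)..t, NormedSpace.exp (-((t - s) • L)) (F (histSeg r u s)) := by
  let zero : Icc (-r) (0 : ℝ) := ⟨0, right_mem_Icc.mpr (neg_nonpos.mpr hr)⟩
  let G : C(C(Icc (-r) (0 : ℝ), E), E) := ⟨fun ψ => F ψ - L (ψ zero), by fun_prop⟩
  have hG : HasLinearGrowth G (K + ‖L‖) :=
    hF.sub ((HasLinearGrowth.of_continuousLinearMap L).comp_of_norm_le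
      fun ψ => ψ.norm_coe_le_norm zero)
  obtain ⟨u, hu_init, hu⟩ := exists_eq_add_integral_histSeg hG hr φ
  have hseg : Continuous fun s => histSeg r u s :=
    (continuous_histSeg r).comp (by fun_prop : Continuous fun s : ℝ => (u, s))
  refine ⟨u, hu_init, fun t ht => eq_exp_smul_add_integral_of_hasDerivAt L ht
    u.continuous.continuousOn (F.continuous.comp hseg).continuousOn fun s hs => ?_⟩
  have hG_seg : G (histSeg r u s) = F (histSeg r u s) - L (u s) := by
    simp only [G, zero, ContinuousMap.coe_mk, histSeg_apply_s6, add_zero]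
  have hu_eq : u =ᶠ[𝓝 s] fun x => u 0 + ∫ y in (0 : ℝ)..x, G (histSeg r u y) := by
    filter_upwards [Ioi_mem_nhds hs.1] with x hx using hu x (le_of_lt hx)
  rw [← hG_seg]
  exact (((G.continuous.comp hseg).integral_hasStrictDerivAt 0 s).hasDerivAt.const_add
    (u 0)).congr_of_eventuallyEq hu_eq

section DelayedFeedback

variable {E : Type*} [NormedAddCommGroup E] [NormedSpace ℝ E] {r : ℝ}

/-- The functional `ψ ↦ b(ψ(-η ψ)) - d ψ(0)` on histories, so that the forcing term
`b(u(s - η(u_s))) - d u(s)` of the delay equation is its value at `u_s`. -/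
def delayedFeedback (hr : 0 ≤ r) (d : ℝ) (b : C(E, E)) (η : C(C(Icc (-r) (0 : ℝ), E), ℝ))
    (hη : ∀ ψ, η ψ ∈ Icc 0 r) : C(C(Icc (-r) (0 : ℝ), E), E) where
  toFun ψ := b (ψ ⟨-η ψ, neg_le_neg (hη ψ).2, neg_nonpos.mpr (hη ψ).1⟩) -
    d • ψ ⟨0, right_mem_Icc.mpr (neg_nonpos.mpr hr)⟩
  continuous_toFun := by fun_prop

variable {hr : 0 ≤ r} {d : ℝ} {b : C(E, E)} {η : C(C(Icc (-r) (0 : ℝ), E), ℝ)}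
  {hη : ∀ ψ, η ψ ∈ Icc 0 r}

lemma delayedFeedback_histSeg (u : C(ℝ, E)) (s : ℝ) :
    delayedFeedback hr d b η hη (histSeg r u s) = b (u (s - η (histSeg r u s))) - d • u s := by
  simp only [delayedFeedback, ContinuousMap.coe_mk, histSeg_apply_s6, add_zero, sub_eq_add_neg]

lemma HasLinearGrowth.delayedFeedback {K : ℝ} (hb : HasLinearGrowth b K) :
    HasLinearGrowth (delayedFeedback hr d b η hη) (K + ‖d • ContinuousLinearMap.id ℝ E‖) :=
  (hb.comp_of_norm_le fun ψ => ψ.norm_coe_le_norm _).sub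
    ((of_continuousLinearMap (d • ContinuousLinearMap.id ℝ E)).comp_of_norm_le
      fun ψ => ψ.norm_coe_le_norm _)

end DelayedFeedback

section MatrixExp

variable {ι : Type*} [Fintype ι] [DecidableEq ι]

lemma toEuclideanCLM_exp (A : Matrix ι ι ℝ) :
    Matrix.toEuclideanCLM (𝕜 := ℝ) (NormedSpace.exp A) =
      NormedSpace.exp (Matrix.toEuclideanCLM (𝕜 := ℝ) A) := by
  let := Matrix.linftyOpNormedRing (n := ι) (α := ℝ)
  let := Matrix.linftyOpNormedAlgebra (n := ι) (R := ℝ) (α := ℝ)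
  let := NormedAlgebra.restrictScalars ℚ ℝ (Matrix ι ι ℝ)
  exact NormedSpace.map_exp (Matrix.toEuclideanCLM (n := ι) (𝕜 := ℝ)).toAlgEquiv
    (LinearMap.continuous_of_finiteDimensional
      (Matrix.toEuclideanCLM (n := ι) (𝕜 := ℝ)).toAlgEquiv.toLinearMap) A

lemma toEuclideanLin_exp_neg_smul_apply (A : Matrix ι ι ℝ) (t : ℝ) (x : EuclideanSpace ℝ ι) :
    Matrix.toEuclideanLin (NormedSpace.exp (-(t • A))) x =
      NormedSpace.exp (-(t • Matrix.toEuclideanCLM (𝕜 := ℝ) A)) x := by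
  rw [← map_smul, ← map_neg, ← toEuclideanCLM_exp]
  rfl

end MatrixExp

lemma locallyLipschitz_of_forall_isBounded {X Y : Type*} [PseudoMetricSpace X]
    [PseudoEMetricSpace Y] {f : X → Y}
    (hf : ∀ s : Set X, Bornology.IsBounded s → ∃ L : NNReal, LipschitzOnWith L f s) :
    LocallyLipschitz f := fun x =>
  let ⟨L, hL⟩ := hf (Metric.ball x 1) Metric.isBounded_ball
  ⟨L, _, Metric.ball_mem_nhds x one_pos, hL⟩

theorem mild_solution_exists_globally_general
    {n : ℕ} (r : ℝ) (hr : 0 < r) (A : Matrix (Fin n) (Fin n) ℝ) (d : ℝ)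
    (b : EuclideanSpace ℝ (Fin n) → EuclideanSpace ℝ (Fin n)) (hb : Continuous b)
    (C₁ Cb : ℝ) (hbgrow : ∀ w, ‖b w‖ ≤ C₁ * ‖w‖ + Cb)
    (η : C(Set.Icc (-r) (0 : ℝ), EuclideanSpace ℝ (Fin n)) → ℝ)
    (hηrange : ∀ φ, η φ ∈ Set.Icc (0 : ℝ) r) (hηcont : Continuous η)
    (φ : C(Set.Icc (-r) (0 : ℝ), EuclideanSpace ℝ (Fin n))) :
    ∃ u : ℝ → EuclideanSpace ℝ (Fin n),
      ContinuousOn u (Set.Ici (-r)) ∧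
      ∀ T : ℝ, 0 < T → IsMildSolution r hr T d A b η φ u := by
  let F := delayedFeedback hr.le d ⟨b, hb⟩ ⟨η, hηcont⟩ hηrange
  have hb_growth : HasLinearGrowth (⟨b, hb⟩ : C(_, _)) (|C₁| + |Cb|) := .of_norm_le hbgrow
  have hF : HasLinearGrowth F _ := hb_growth.delayedFeedback
  obtain ⟨u, hu_init, hu⟩ :=
    exists_mild_solution_of_hasLinearGrowth hr.le (Matrix.toEuclideanCLM (𝕜 := ℝ) A) hF φ
  have hu_zero : u 0 = φ ⟨0, right_mem_Icc.mpr (by linarith)⟩ :=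
    hu_init ⟨0, _⟩
  have hF_seg : ∀ s, F (histSeg r u s) = b (u (s - η (histSeg r u s))) - d • u s :=
    delayedFeedback_histSeg u
  have hF_cont : Continuous fun s => F (histSeg r u s) := by
    simpa only [sub_zero] using continuous_map_histSeg_sub F u 0
  refine ⟨u, u.continuous.continuousOn, fun T _ =>
    ⟨u.continuous.continuousOn, hu_init, fun t ht => ?_⟩⟩
  simp only [← hF_seg, toEuclideanLin_exp_neg_smul_apply, ← hu_zero]
  exact ⟨((continuous_exp_neg_sub_smul _ t).clm_apply hF_cont).intervalIntegrable _ _, hu t ht.1⟩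

/-- global existence of a mild solution of the state-dependent delay ODE
`u'(t) + Au(t) + du(t) = b(u(t - η(u_t)))` for every continuous initial function `φ`. -/
theorem mild_solution_exists_globally
    {n : ℕ} (hn : 1 ≤ n) (r : ℝ) (hr : 0 < r)
    (A : Matrix (Fin n) (Fin n) ℝ) (hA : A.PosSemidef) (hAs : A.IsSymm)
    (d : ℝ) (hd : 0 ≤ d)
    (b : EuclideanSpace ℝ (Fin n) → EuclideanSpace ℝ (Fin n))
    (hbLip : ∀ s : Set (EuclideanSpace ℝ (Fin n)), Bornology.IsBounded s →
      ∃ L : NNReal, LipschitzOnWith L b s)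
    (C₁ Cb : ℝ) (hC₁ : 0 ≤ C₁) (hCb : 0 ≤ Cb)
    (hbgrow : ∀ w, ‖b w‖ ≤ C₁ * ‖w‖ + Cb)
    (η : C(Set.Icc (-r) (0:ℝ), EuclideanSpace ℝ (Fin n)) → ℝ)
    (hηrange : ∀ φ, η φ ∈ Set.Icc (0:ℝ) r) (hηcont : Continuous η)
    (φ : C(Set.Icc (-r) (0:ℝ), EuclideanSpace ℝ (Fin n))) :
    ∃ u : ℝ → EuclideanSpace ℝ (Fin n),
      ContinuousOn u (Set.Ici (-r)) ∧
      ∀ T : ℝ, 0 < T → IsMildSolution r hr T d A b η φ u := by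
  exact mild_solution_exists_globally_general r hr A d b
    (locallyLipschitz_of_forall_isBounded hbLip).continuous C₁ Cb hbgrow η hηrange hηcont φ
end
end

section
/- Let δ ∈ [0, 1/2), let 0 < t₁ ≤ t₂, let (λ_k)_{k∈ℕ} be a sequence of positive real numbers, and let (v_k)_{k∈ℕ} be a real sequence with Σ_k v_k² < ∞. Then Σ_k (e^{−λ_k t₁} − e^{−λ_k t₂})² · λ_k^{2δ} · v_k² ≤ D_δ² · t₁^{−(2δ+1)} · (t₂ − t₁) · Σ_k v_k², where D_δ = e^{−(δ+1/2)}·(δ+1/2)^{δ+1/2}. Equivalently, in square-root form: (Σ_k (e^{−λ_k t₁} − e^{−λ_k t₂})² λ_k^{2δ} v_k²)^{1/2} ≤ D_δ · t₁^{−(δ+1/2)} · (t₂−t₁)^{1/2} · (Σ_k v_k²)^{1/2}. -/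
/-!
On an eigenvalue `l`, write `e^{-l t₁} - e^{-l t₂} = e^{-l t₁} (1 - e^{-l (t₂ - t₁)})`. Since
`1 - e^{-y} ≤ y ^ θ` for `θ ∈ [0, 1]`, the second factor yields `(t₂ - t₁) ^ θ` at the cost of
`l ^ θ`, which the first factor absorbs because `x ↦ e^{-x} x ^ s` is maximal at `x = s`. Thus the
spectral multiplier is bounded uniformly in `l`, and a bounded multiplier acts boundedly on `ℓ²`.
The theorem is the case `θ = 1 / 2`.
-/

section ExponentialBounds

variable {l s t x : ℝ}

theorem rpow_two_mul_eq_sq (hx : 0 ≤ x) (s : ℝ) : x ^ (2 * s) = (x ^ s) ^ 2 := by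
  rw [mul_comm, Real.rpow_mul hx, Real.rpow_two]

theorem exp_neg_mul_rpow_le (hs : 0 ≤ s) (hx : 0 ≤ x) :
    Real.exp (-x) * x ^ s ≤ Real.exp (-s) * s ^ s := by
  rcases hs.eq_or_lt with rfl | hs
  · simpa using hx
  have div_le_exp : x / s ≤ Real.exp (x / s - 1) := by
    simpa using Real.add_one_le_exp (x / s - 1)
  have rpow_le : x ^ s ≤ Real.exp (x - s) * s ^ s := by
    calc x ^ s = (x / s) ^ s * s ^ s := by
          rw [← Real.mul_rpow (by positivity) hs.le, div_mul_cancel₀ _ hs.ne']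
      _ ≤ Real.exp (x / s - 1) ^ s * s ^ s := by gcongr
      _ = Real.exp (x - s) * s ^ s := by
          rw [← Real.exp_mul, sub_mul, div_mul_cancel₀ _ hs.ne', one_mul]
  calc Real.exp (-x) * x ^ s ≤ Real.exp (-x) * (Real.exp (x - s) * s ^ s) := by gcongr
    _ = Real.exp (-s) * s ^ s := by
        rw [← mul_assoc, ← Real.exp_add, neg_add_eq_sub, sub_sub_cancel_left]

theorem exp_neg_mul_mul_rpow_le (hs : 0 ≤ s) (ht : 0 < t) (hl : 0 ≤ l) :
    Real.exp (-(l * t)) * l ^ s ≤ Real.exp (-s) * s ^ s * t ^ (-s) := by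
  rw [Real.rpow_neg ht.le, ← div_eq_mul_inv, le_div_iff₀ (by positivity), mul_assoc,
    ← Real.mul_rpow hl ht.le]
  exact exp_neg_mul_rpow_le hs (by positivity)

theorem one_sub_exp_neg_le_rpow {θ : ℝ} (hθ₀ : 0 ≤ θ) (hθ₁ : θ ≤ 1) (hx : 0 ≤ x) :
    1 - Real.exp (-x) ≤ x ^ θ := by
  have nonneg : 0 ≤ 1 - Real.exp (-x) := by simpa using hx
  have le_one : 1 - Real.exp (-x) ≤ 1 := by simpa using (Real.exp_pos (-x)).le
  have le_self : 1 - Real.exp (-x) ≤ x := by linarith [Real.one_sub_le_exp_neg x]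
  calc 1 - Real.exp (-x) ≤ (1 - Real.exp (-x)) ^ θ :=
        Real.self_le_rpow_of_le_one nonneg le_one hθ₁
    _ ≤ x ^ θ := Real.rpow_le_rpow nonneg le_self hθ₀

theorem exp_neg_sub_exp_neg_mul_rpow_le {δ θ t₁ t₂ : ℝ} (hθ₀ : 0 ≤ θ) (hθ₁ : θ ≤ 1)
    (hδθ : 0 ≤ δ + θ) (ht₁ : 0 < t₁) (ht : t₁ ≤ t₂) (hl : 0 ≤ l) :
    (Real.exp (-(l * t₁)) - Real.exp (-(l * t₂))) * l ^ δ ≤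
      Real.exp (-(δ + θ)) * (δ + θ) ^ (δ + θ) * t₁ ^ (-(δ + θ)) * (t₂ - t₁) ^ θ := by
  have ht_sub : 0 ≤ t₂ - t₁ := sub_nonneg.2 ht
  have exp_split : Real.exp (-(l * t₂)) =
      Real.exp (-(l * t₁)) * Real.exp (-(l * (t₂ - t₁))) := by
    rw [← Real.exp_add]
    ring_nf
  calc (Real.exp (-(l * t₁)) - Real.exp (-(l * t₂))) * l ^ δ
      = Real.exp (-(l * t₁)) * l ^ δ * (1 - Real.exp (-(l * (t₂ - t₁)))) := by
        rw [exp_split]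
        ring
    _ ≤ Real.exp (-(l * t₁)) * l ^ δ * (l * (t₂ - t₁)) ^ θ := by
        gcongr
        exact one_sub_exp_neg_le_rpow hθ₀ hθ₁ (by positivity)
    _ = Real.exp (-(l * t₁)) * (l ^ δ * l ^ θ) * (t₂ - t₁) ^ θ := by
        rw [Real.mul_rpow hl ht_sub]
        ring
    _ ≤ Real.exp (-(l * t₁)) * l ^ (δ + θ) * (t₂ - t₁) ^ θ := by
        gcongr
        exact Real.le_rpow_add hl δ θ
    _ ≤ Real.exp (-(δ + θ)) * (δ + θ) ^ (δ + θ) * t₁ ^ (-(δ + θ)) * (t₂ - t₁) ^ θ := by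
        gcongr ?_ * _
        exact exp_neg_mul_mul_rpow_le hδθ ht₁ hl

theorem abs_exp_neg_sub_exp_neg_mul_rpow_le {δ θ t₁ t₂ : ℝ} (hθ₀ : 0 ≤ θ) (hθ₁ : θ ≤ 1)
    (hδθ : 0 ≤ δ + θ) (ht₁ : 0 < t₁) (ht : t₁ ≤ t₂) (hl : 0 ≤ l) :
    |(Real.exp (-(l * t₁)) - Real.exp (-(l * t₂))) * l ^ δ| ≤
      Real.exp (-(δ + θ)) * (δ + θ) ^ (δ + θ) * t₁ ^ (-(δ + θ)) * (t₂ - t₁) ^ θ := by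
  have exp_le : Real.exp (-(l * t₂)) ≤ Real.exp (-(l * t₁)) := by gcongr
  rw [abs_of_nonneg (mul_nonneg (sub_nonneg.2 exp_le) (by positivity))]
  exact exp_neg_sub_exp_neg_mul_rpow_le hθ₀ hθ₁ hδθ ht₁ ht hl

end ExponentialBounds

section BoundedMultiplier

theorem sq_mul_sq_le_of_abs_le {a C : ℝ} (ha : |a| ≤ C) (b : ℝ) :
    a ^ 2 * b ^ 2 ≤ C ^ 2 * b ^ 2 := by
  gcongr ?_ * _
  exact sq_le_sq.2 (ha.trans (le_abs_self C))

variable {ι : Type*} {m v : ι → ℝ} {C : ℝ}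

theorem summable_sq_mul_sq_of_abs_le (hm : ∀ k, |m k| ≤ C) (hv : Summable fun k => v k ^ 2) :
    Summable fun k => m k ^ 2 * v k ^ 2 :=
  (hv.mul_left (C ^ 2)).of_nonneg_of_le (fun _ => by positivity)
    fun k => sq_mul_sq_le_of_abs_le (hm k) (v k)

theorem tsum_sq_mul_sq_le_of_abs_le (hm : ∀ k, |m k| ≤ C) (hv : Summable fun k => v k ^ 2) :
    ∑' k, m k ^ 2 * v k ^ 2 ≤ C ^ 2 * ∑' k, v k ^ 2 := by
  rw [← tsum_mul_left]
  exact (summable_sq_mul_sq_of_abs_le hm hv).tsum_le_tsum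
    (fun k => sq_mul_sq_le_of_abs_le (hm k) (v k)) (hv.mul_left _)

theorem sqrt_tsum_sq_mul_sq_le_of_abs_le (hC : 0 ≤ C) (hm : ∀ k, |m k| ≤ C)
    (hv : Summable fun k => v k ^ 2) :
    Real.sqrt (∑' k, m k ^ 2 * v k ^ 2) ≤ C * Real.sqrt (∑' k, v k ^ 2) := by
  calc Real.sqrt (∑' k, m k ^ 2 * v k ^ 2) ≤ Real.sqrt (C ^ 2 * ∑' k, v k ^ 2) :=
        Real.sqrt_le_sqrt (tsum_sq_mul_sq_le_of_abs_le hm hv)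
    _ = C * Real.sqrt (∑' k, v k ^ 2) := by rw [Real.sqrt_mul (sq_nonneg C), Real.sqrt_sq hC]

end BoundedMultiplier

-- For `lam k = 0` and `δ < 0` the junk value of `0 ^ (2 * δ)` is harmless: the factor next to it
-- is `exp 0 - exp 0 = 0`.
theorem spectral_series_estimate_sqrt_form_general {ι : Type*} {δ θ t₁ t₂ : ℝ}
    (hθ₀ : 0 ≤ θ) (hθ₁ : θ ≤ 1) (hδθ : 0 ≤ δ + θ) (ht₁ : 0 < t₁) (ht : t₁ ≤ t₂)
    {lam : ι → ℝ} (hlam : ∀ k, 0 ≤ lam k) {v : ι → ℝ} (hv : Summable fun k => v k ^ 2) :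
    (Summable fun k => (Real.exp (-(lam k * t₁)) - Real.exp (-(lam k * t₂))) ^ 2 *
        lam k ^ (2 * δ) * v k ^ 2) ∧
    (∑' k, (Real.exp (-(lam k * t₁)) - Real.exp (-(lam k * t₂))) ^ 2 *
        lam k ^ (2 * δ) * v k ^ 2) ≤
      (Real.exp (-(δ + θ)) * (δ + θ) ^ (δ + θ)) ^ 2 *
        t₁ ^ (-(2 * δ + 2 * θ)) * (t₂ - t₁) ^ (2 * θ) * ∑' k, v k ^ 2 ∧
    Real.sqrt (∑' k, (Real.exp (-(lam k * t₁)) - Real.exp (-(lam k * t₂))) ^ 2 *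
        lam k ^ (2 * δ) * v k ^ 2) ≤
      Real.exp (-(δ + θ)) * (δ + θ) ^ (δ + θ) *
        t₁ ^ (-(δ + θ)) * (t₂ - t₁) ^ θ * Real.sqrt (∑' k, v k ^ 2) := by
  have ht_sub : 0 ≤ t₂ - t₁ := sub_nonneg.2 ht
  have multiplier_le (k : ι) :
      |(Real.exp (-(lam k * t₁)) - Real.exp (-(lam k * t₂))) * lam k ^ δ| ≤
        Real.exp (-(δ + θ)) * (δ + θ) ^ (δ + θ) * t₁ ^ (-(δ + θ)) * (t₂ - t₁) ^ θ :=
    abs_exp_neg_sub_exp_neg_mul_rpow_le hθ₀ hθ₁ hδθ ht₁ ht (hlam k)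
  have t₁_rpow : t₁ ^ (-(2 * δ + 2 * θ)) = (t₁ ^ (-(δ + θ))) ^ 2 := by
    rw [← rpow_two_mul_eq_sq ht₁.le, mul_neg, mul_add]
  simp only [rpow_two_mul_eq_sq (hlam _), t₁_rpow, rpow_two_mul_eq_sq ht_sub]
  refine ⟨?_, ?_, ?_⟩
  · simpa only [mul_pow] using summable_sq_mul_sq_of_abs_le multiplier_le hv
  · simpa only [mul_pow] using tsum_sq_mul_sq_le_of_abs_le multiplier_le hv
  · simpa only [mul_pow] using sqrt_tsum_sq_mul_sq_le_of_abs_le (by positivity) multiplier_le hv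

/-- the spectral series estimate (sdd8-5-5) of the paper:
`Σ_k (e^{−λ_k t₁} − e^{−λ_k t₂})² λ_k^{2δ} v_k² ≤ D_δ² t₁^{−(2δ+1)} (t₂−t₁) Σ_k v_k²`,
where `D_δ = e^{−(δ+1/2)} (δ+1/2)^{δ+1/2}`, together with its square-root form. -/
theorem spectral_series_estimate_sqrt_form
    (δ t₁ t₂ : ℝ) (hδ0 : 0 ≤ δ) (hδ : δ < 1 / 2) (ht₁ : 0 < t₁) (ht : t₁ ≤ t₂)
    (lam : ℕ → ℝ) (hlam : ∀ k, 0 < lam k)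
    (v : ℕ → ℝ) (hv : Summable fun k => v k ^ 2) :
    (∑' k : ℕ, (Real.exp (-(lam k * t₁)) - Real.exp (-(lam k * t₂))) ^ 2 *
        lam k ^ (2 * δ) * v k ^ 2) ≤
      (Real.exp (-(δ + 1 / 2)) * (δ + 1 / 2) ^ (δ + 1 / 2)) ^ 2 *
        t₁ ^ (-(2 * δ + 1)) * (t₂ - t₁) * ∑' k : ℕ, v k ^ 2 ∧
    Real.sqrt (∑' k : ℕ, (Real.exp (-(lam k * t₁)) - Real.exp (-(lam k * t₂))) ^ 2 *
        lam k ^ (2 * δ) * v k ^ 2) ≤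
      Real.exp (-(δ + 1 / 2)) * (δ + 1 / 2) ^ (δ + 1 / 2) *
        t₁ ^ (-(δ + 1 / 2)) * Real.sqrt (t₂ - t₁) * Real.sqrt (∑' k : ℕ, v k ^ 2) := by
  simpa only [Real.sqrt_eq_rpow, mul_one_div_cancel (two_ne_zero' ℝ), Real.rpow_one] using
    (spectral_series_estimate_sqrt_form_general (θ := 1 / 2) (by norm_num) (by norm_num)
      (by linarith) ht₁ ht (fun k => (hlam k).le) hv).2
end
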